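/- Let 𝔅 be a homothecy invariant basis of nonempty bounded open convex subsets of ℝⁿ and let w be a nonnegative locally integrable function on ℝⁿ with ∫_B w < ∞ for every B ∈ 𝔅; write w(A) = ∫_A w(x) dx. Let M_𝔅 denote the maximal operator with respect to Lebesgue measure. Then the following are equivalent: (i) there exist γ ∈ (0,1) and c > 0 such that w({x ∈ ℝⁿ : M_𝔅(1_E)(x) > γ}) ≤ c·w(E) for every Lebesgue measurable set E ⊆ ℝⁿ; (ii) there exists p₀ > 1 such that M_𝔅 is bounded on L^p(w) for every p > p₀. -/

import Mathlib

open MeasureTheory Set Filter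
open scoped ENNReal Topology Pointwise

noncomputable section

/-- The maximal operator `M_{𝔅,μ}` associated to a measure `μ` and a collection `𝔅`
of subsets of `ℝⁿ`, applied to `f` at the point `x` (valued in `ℝ≥0∞`; it equals `0`
outside the union of `𝔅`). -/
noncomputable def maxOp {n : ℕ} (μ : Measure (EuclideanSpace ℝ (Fin n)))
    (𝔅 : Set (Set (EuclideanSpace ℝ (Fin n))))
    (f : EuclideanSpace ℝ (Fin n) → ℝ) (x : EuclideanSpace ℝ (Fin n)) : ℝ≥0∞ :=
  ⨆ (B : Set (EuclideanSpace ℝ (Fin n))) (_ : B ∈ 𝔅) (_ : x ∈ B) (_ : 0 < μ B),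
    (∫⁻ y in B, ENNReal.ofReal |f y| ∂μ) / μ B

/-- A collection of sets is homothecy invariant if it is closed under translations and
positive dilations. -/
def HomothecyInvariant {n : ℕ} (𝔅 : Set (Set (EuclideanSpace ℝ (Fin n)))) : Prop :=
  ∀ B ∈ 𝔅, (∀ y : EuclideanSpace ℝ (Fin n), y +ᵥ B ∈ 𝔅) ∧ (∀ s : ℝ, 0 < s → s • B ∈ 𝔅)

/-- `μ` is doubling with respect to the collection `𝔅`, with constant `Δ`: whenever
`B ∈ 𝔅` and a translate of the dilate `2·B` contains `B`, its measure is at most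
`Δ·μ(B)`. -/
def DoublingWrt {n : ℕ} (μ : Measure (EuclideanSpace ℝ (Fin n)))
    (𝔅 : Set (Set (EuclideanSpace ℝ (Fin n)))) (Δ : ℝ) : Prop :=
  ∀ B ∈ 𝔅, ∀ σ : EuclideanSpace ℝ (Fin n),
    B ⊆ σ +ᵥ (2 : ℝ) • B → μ (σ +ᵥ (2 : ℝ) • B) ≤ ENNReal.ofReal Δ * μ B

/-- A member of a basis of convex sets: nonempty, bounded, open and convex. -/
def IsConvexBasisSet {n : ℕ} (B : Set (EuclideanSpace ℝ (Fin n))) : Prop :=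
  B.Nonempty ∧ Bornology.IsBounded B ∧ IsOpen B ∧ Convex ℝ B

/-- An open axis-parallel rectangle in `ℝⁿ`. -/
def IsAxisRect {n : ℕ} (R : Set (EuclideanSpace ℝ (Fin n))) : Prop :=
  ∃ a b : Fin n → ℝ, (∀ i, a i < b i) ∧ R = {x | ∀ i, x i ∈ Set.Ioo (a i) (b i)}

/-- An open rectangle (possibly rotated rectangular parallelepiped) in `ℝⁿ`:
the image of an open axis-parallel rectangle under a rigid motion. -/
def IsRect {n : ℕ} (R : Set (EuclideanSpace ℝ (Fin n))) : Prop :=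
  ∃ (f : EuclideanSpace ℝ (Fin n) ≃ᵢ EuclideanSpace ℝ (Fin n))
    (S : Set (EuclideanSpace ℝ (Fin n))), IsAxisRect S ∧ R = f '' S

/-- An open axis-parallel cube in `ℝⁿ`. -/
def IsAxisCube {n : ℕ} (C : Set (EuclideanSpace ℝ (Fin n))) : Prop :=
  ∃ (a : Fin n → ℝ) (s : ℝ), 0 < s ∧ C = {x | ∀ i, x i ∈ Set.Ioo (a i) (a i + s)}

/-- `M_{𝔅,μ}` is bounded on `L^p(ν)`. -/
def BoundedOnLp {n : ℕ} (μ ν : Measure (EuclideanSpace ℝ (Fin n)))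
    (𝔅 : Set (Set (EuclideanSpace ℝ (Fin n)))) (p : ℝ) : Prop :=
  ∃ C : ℝ≥0∞, C ≠ ⊤ ∧ ∀ f : EuclideanSpace ℝ (Fin n) → ℝ, Measurable f →
    ∫⁻ x, maxOp μ 𝔅 f x ^ p ∂ν ≤ C * ∫⁻ x, ENNReal.ofReal |f x| ^ p ∂ν

/-- The Tauberian condition for `M_{𝔅,μ}` at level `γ`, with constant `c`, with respect
to the measure `ν`. -/
def TauberianCond {n : ℕ} (μ ν : Measure (EuclideanSpace ℝ (Fin n)))
    (𝔅 : Set (Set (EuclideanSpace ℝ (Fin n)))) (γ c : ℝ) : Prop :=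
  ∀ E : Set (EuclideanSpace ℝ (Fin n)), MeasurableSet E →
    ν {x | ENNReal.ofReal γ < maxOp μ 𝔅 (E.indicator 1) x} ≤ ENNReal.ofReal c * ν E

/-- The standard open dyadic box of scale `2^k` and position `m` in `ℝⁿ`. -/
def stdBox (n : ℕ) (k : ℤ) (m : Fin n → ℤ) : Set (Fin n → ℝ) :=
  {x | ∀ i, (m i : ℝ) * 2 ^ k < x i ∧ x i < ((m i : ℝ) + 1) * 2 ^ k}

/-- A parametrization of a rectangular grid: a rigid motion composed with a positive
diagonal scaling. The image of the standard unit box under such a map is a rectangle. -/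
def IsRectParam {n : ℕ} (T : (Fin n → ℝ) → EuclideanSpace ℝ (Fin n)) : Prop :=
  ∃ (f : EuclideanSpace ℝ (Fin n) ≃ᵢ EuclideanSpace ℝ (Fin n)) (l : Fin n → ℝ),
    (∀ i, 0 < l i) ∧
    ∀ x, T x = f ((WithLp.equiv 2 (Fin n → ℝ)).symm (fun i => l i * x i))

/-- The dyadic mesh generated by a rectangle parametrized by `T`. -/
def dyadicMesh {n : ℕ} (T : (Fin n → ℝ) → EuclideanSpace ℝ (Fin n)) :
    Set (Set (EuclideanSpace ℝ (Fin n))) :=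
  {S | ∃ (k : ℤ) (m : Fin n → ℤ), S = T '' stdBox n k m}

/-- `S` is a dyadic descendant of the rectangle `R`, `s` generations inside `R`. -/
def DyadicDescendant {n : ℕ} (R S : Set (EuclideanSpace ℝ (Fin n))) (s : ℕ) : Prop :=
  ∃ T : (Fin n → ℝ) → EuclideanSpace ℝ (Fin n), IsRectParam T ∧
    T '' stdBox n 0 0 = R ∧
    ∃ m : Fin n → ℤ, (∀ i, 0 ≤ m i ∧ m i < 2 ^ s) ∧ S = T '' stdBox n (-(s : ℤ)) m

/-- The family of all homothetic copies (translates and positive dilates) of `R₀`. -/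
def homCopies {n : ℕ} (R₀ : Set (EuclideanSpace ℝ (Fin n))) :
    Set (Set (EuclideanSpace ℝ (Fin n))) :=
  {S | ∃ (y : EuclideanSpace ℝ (Fin n)) (s : ℝ), 0 < s ∧ S = y +ᵥ s • R₀}

/-- Iterated halo sets `H_β^k(E)`: `H_β^0(E) = E` and
`H_β^{k+1}(E) = {x : M_{𝔊,μ}(1_{H_β^k(E)})(x) ≥ β}`. -/
def Hiter {n : ℕ} (μ : Measure (EuclideanSpace ℝ (Fin n)))
    (𝔊 : Set (Set (EuclideanSpace ℝ (Fin n)))) (β : ℝ)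
    (E : Set (EuclideanSpace ℝ (Fin n))) : ℕ → Set (EuclideanSpace ℝ (Fin n))
  | 0 => E
  | k + 1 => {x | ENNReal.ofReal β ≤ maxOp μ 𝔊 ((Hiter μ 𝔊 β E k).indicator 1) x}

/-- The Muckenhoupt `A_{p,𝔅}` condition for a weight `w` (with respect to Lebesgue
measure); here `1 - p/(p-1) = 1 - p'`. -/
def MuckenhouptAp {n : ℕ} (𝔅 : Set (Set (EuclideanSpace ℝ (Fin n))))
    (w : EuclideanSpace ℝ (Fin n) → ℝ) (p : ℝ) : Prop :=
  ∃ C : ℝ≥0∞, C ≠ ⊤ ∧ ∀ B ∈ 𝔅,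
    ((∫⁻ x in B, ENNReal.ofReal (w x) ∂volume) / volume B) *
      (((∫⁻ x in B, ENNReal.ofReal (w x) ^ (1 - p / (p - 1)) ∂volume) / volume B) ^ (p - 1))
      ≤ C

/-- `𝔅` is a Muckenhoupt basis: for every `1 < p < ∞` and every weight `w ∈ A_{p,𝔅}`,
the maximal operator `M_𝔅` is bounded on `L^p(w)`. -/
def MuckenhouptBasis {n : ℕ} (𝔅 : Set (Set (EuclideanSpace ℝ (Fin n)))) : Prop :=
  ∀ p : ℝ, 1 < p → ∀ w : EuclideanSpace ℝ (Fin n) → ℝ, (∀ x, 0 ≤ w x) →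
    LocallyIntegrable w volume → MuckenhouptAp 𝔅 w p →
    BoundedOnLp volume (volume.withDensity fun x => ENNReal.ofReal (w x)) 𝔅 p

end

/-!
Let `B` be a member of the basis in which `A` has density at most `β < 1`. At a density point `x`
of `A` in `B`, shrinking `B` towards `x` raises the density of `A` continuously to `1`, so some
homothetic copy of `B` inside `B` carries density exactly `β` and lies in the halo of `A` at any
level `α < β`. A Vitali selection among these copies loses only the factor `12 ^ n`: a copy meeting
a selected one of at least half its size lies in the corresponding copy of `3B - 2B`, whose volume
Ruzsa's triangle inequality bounds by `12 ^ n * |B|`, whatever the shape of `B`. Hence one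
halo step multiplies the measure of `A ∩ B` by a factor `η > 1` depending only on `n` and `β`, and
the halo of `A` at level `η ^ (-k)` is contained in its `k`-fold iterated halo at level `α`.

A Tauberian condition at the single level `α` therefore gives one at every level `4 ^ (-m)`, with a
constant `Q ^ m`. Slicing `f` at the heights `2 ^ m * t` bounds `ν {3 * t < M f}` by
`∑ Q ^ m * ν {2 ^ m * t < f}`, which the layer cake formula turns into a strong `L^p` bound as soon
as `Q < 2 ^ p`. The converse is Markov's inequality.
-/

open AffineMap (homothety)
open Module (finrank)

section Ruzsa

variable {G : Type*} [AddCommGroup G] [TopologicalSpace G] [IsTopologicalAddGroup G]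
  [SecondCountableTopology G] [MeasurableSpace G] [BorelSpace G]

/-- Ruzsa's triangle inequality, by counting the representations `x - z = (x + y) - (y + z)`. -/
theorem measure_sub_mul_measure_le (μ : Measure G) [SFinite μ] [μ.IsAddLeftInvariant]
    {X Y : Set G} (hX : IsOpen X) (hY : IsOpen Y) (Z : Set G) :
    μ (X - Z) * μ Y ≤ μ (X + Y) * μ (Y + Z) := by
  let T : Set (G × G) := (fun z => (z.1, z.1 + z.2)) ⁻¹' ((Y + Z) ×ˢ (X + Y))
  have hYZ : MeasurableSet ((Y + Z) ×ˢ (X + Y)) :=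
    hY.add_right.measurableSet.prod hY.add_left.measurableSet
  have hshear : MeasurePreserving (fun z : G × G => (z.1, z.1 + z.2)) (μ.prod μ) (μ.prod μ) :=
    measurePreserving_prod_add μ μ
  have hslice : ∀ d ∈ X - Z, μ Y ≤ μ ((fun q => (q, d)) ⁻¹' T) := by
    rintro _ ⟨x, hx, z, hz, rfl⟩
    rw [← measure_preimage_add_right μ (-z) Y]
    refine measure_mono fun q hq => ⟨⟨q + -z, hq, z, hz, by simp⟩, ⟨x, hx, q + -z, hq, ?_⟩⟩
    simp only; abel
  calc μ (X - Z) * μ Y = ∫⁻ _ in X - Z, μ Y ∂μ := by rw [setLIntegral_const, mul_comm]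
    _ ≤ ∫⁻ d, μ ((fun q => (q, d)) ⁻¹' T) ∂μ :=
      (setLIntegral_mono' hX.sub_right.measurableSet hslice).trans (setLIntegral_le_lintegral _ _)
    _ = μ.prod μ T := (Measure.prod_apply_symm (hshear.measurable hYZ)).symm
    _ = μ (X + Y) * μ (Y + Z) := by
      rw [hshear.measure_preimage hYZ.nullMeasurableSet, Measure.prod_prod, mul_comm]

end Ruzsa

section Homothety

variable {E : Type*} [AddCommGroup E] [Module ℝ E] {B : Set E} {x y : E} {r s : ℝ}

theorem homothety_image_subset_self (hB : Convex ℝ B) (hx : x ∈ B) (hr : r ∈ Icc (0 : ℝ) 1) :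
    homothety x r '' B ⊆ B := by
  rintro _ ⟨b, hb, rfl⟩
  rw [AffineMap.homothety_eq_lineMap]
  exact hB.lineMap_mem hx hb hr

theorem monotoneOn_homothety_image (hB : Convex ℝ B) (hx : x ∈ B) :
    MonotoneOn (fun r : ℝ => homothety x r '' B) (Ioi 0) := by
  intro r (hr : 0 < r) s (hs : 0 < s) hrs
  have hfactor : homothety x r = (homothety x s).comp (homothety x (r / s)) := by
    rw [← AffineMap.homothety_mul, mul_div_cancel₀ _ hs.ne']
  simp only [hfactor, AffineMap.coe_comp, image_comp]
  exact image_mono (homothety_image_subset_self hB hx ⟨by positivity, (div_le_one hs).2 hrs⟩)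

theorem homothety_image_subset_of_inter_nonempty (hB : Convex ℝ B) (hr : 0 < r) (hs : 0 < s)
    (hrs : r ≤ 2 * s) (h : (homothety x r '' B ∩ homothety y s '' B).Nonempty) :
    homothety x r '' B ⊆ homothety y s '' ((3 : ℝ) • B - (2 : ℝ) • B) := by
  obtain ⟨_, ⟨b, hb, rfl⟩, ⟨c, hc, hbc⟩⟩ := h
  rintro _ ⟨a, ha, rfl⟩
  have hca : (1 / 3 : ℝ) • c + (2 / 3 : ℝ) • a ∈ B :=
    hB hc ha (by norm_num) (by norm_num) (by norm_num)
  have hba : (r / (2 * s)) • b + (1 - r / (2 * s)) • a ∈ B :=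
    hB hb ha (by positivity) (sub_nonneg.2 ((div_le_one (by positivity)).2 hrs)) (by ring)
  refine ⟨_, sub_mem_sub (smul_mem_smul_set hca) (smul_mem_smul_set hba), ?_⟩
  simp only [AffineMap.homothety_apply, vsub_eq_sub, vadd_eq_add] at hbc ⊢
  -- The chosen point of `3B - 2B` is `c + (r / s) • (a - b)`.
  have hlift := congrArg (· + r • (a - b)) hbc
  convert hlift using 1 <;> match_scalars <;> field_simp <;> ring

end Homothety

section MonotoneFamily

variable {X ι : Type*} [MeasurableSpace X] {μ : Measure X} [LinearOrder ι] [TopologicalSpace ι]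
  {H : ι → Set X}

theorem continuousOn_measureReal_inter {s : Set ι} (hmono : MonotoneOn H s)
    (hmeas : ∀ i ∈ s, MeasurableSet (H i)) (hfin : ∀ i ∈ s, μ (H i) ≠ ∞)
    (hcont : ContinuousOn (fun i => μ.real (H i)) s) (A : Set X) :
    ContinuousOn (fun i => μ.real (A ∩ H i)) s := by
  have hdist : ∀ i ∈ s, ∀ j ∈ s, i ≤ j →
      dist (μ.real (A ∩ H j)) (μ.real (A ∩ H i)) ≤ dist (μ.real (H j)) (μ.real (H i)) := by
    intro i hi j hj hij
    have hsub := hmono hi hj hij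
    have hinter : μ.real (A ∩ H i) ≤ μ.real (A ∩ H j) :=
      measureReal_mono (inter_subset_inter_right A hsub)
        (measure_ne_top_of_subset inter_subset_right (hfin j hj))
    have hunion : A ∩ H j ⊆ A ∩ H i ∪ H j \ H i := fun z ⟨hzA, hzj⟩ =>
      (em (z ∈ H i)).imp (fun hzi => ⟨hzA, hzi⟩) (fun hzi => ⟨hzj, hzi⟩)
    have hdiff : μ.real (A ∩ H j) ≤ μ.real (A ∩ H i) + μ.real (H j \ H i) :=
      (measureReal_mono hunion (measure_ne_top_of_subset
        (union_subset (inter_subset_right.trans hsub) sdiff_subset) (hfin j hj))).trans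
        (measureReal_union_le _ _)
    rw [measureReal_sdiff hsub (hmeas i hi) (hfin j hj)] at hdiff
    rw [Real.dist_eq, Real.dist_eq, abs_of_nonneg (by linarith)]
    exact (sub_le_iff_le_add'.2 hdiff).trans (le_abs_self _)
  intro i hi
  rw [ContinuousWithinAt, tendsto_iff_dist_tendsto_zero]
  refine squeeze_zero' (.of_forall fun _ => dist_nonneg) ?_
    (tendsto_iff_dist_tendsto_zero.1 (hcont i hi))
  filter_upwards [self_mem_nhdsWithin] with j hj
  rcases le_total i j with hij | hji
  · exact hdist i hi j hj hij
  · simpa only [dist_comm] using hdist j hj i hi hji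

theorem exists_measure_inter_eq_mul {s : Set ι} (hs : IsPreconnected s) (hmono : MonotoneOn H s)
    (hmeas : ∀ i ∈ s, MeasurableSet (H i)) (hfin : ∀ i ∈ s, μ (H i) ≠ ∞)
    (hcont : ContinuousOn (fun i => μ.real (H i)) s) {A : Set X} {β : ℝ≥0∞} (hβ : β ≠ ∞)
    {i j : ι} (hi : i ∈ s) (hj : j ∈ s) (hle : μ (A ∩ H i) ≤ β * μ (H i))
    (hge : β * μ (H j) ≤ μ (A ∩ H j)) :
    ∃ k ∈ s, μ (A ∩ H k) = β * μ (H k) := by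
  have hinter : ∀ k ∈ s, μ (A ∩ H k) ≠ ∞ := fun k hk =>
    measure_ne_top_of_subset inter_subset_right (hfin k hk)
  have hmul : ∀ k ∈ s, β * μ (H k) ≠ ∞ := fun k hk => ENNReal.mul_ne_top hβ (hfin k hk)
  obtain ⟨k, hk, heq⟩ := hs.intermediate_value₂ hi hj
    (continuousOn_measureReal_inter hmono hmeas hfin hcont A) (hcont.const_mul β.toReal)
    (by simpa [measureReal_def] using ENNReal.toReal_mono (hmul i hi) hle)
    (by simpa [measureReal_def] using ENNReal.toReal_mono (hinter j hj) hge)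
  refine ⟨k, hk, (ENNReal.toReal_eq_toReal_iff' (hinter k hk) (hmul k hk)).1 ?_⟩
  simpa [measureReal_def] using heq

end MonotoneFamily

section Halo

variable {X : Type*} [MeasurableSpace X] {μ : Measure X} {𝔅 : Set (Set X)} {α β : ℝ≥0∞}
  {A B : Set X}

/-- The halo of `A` at level `α`: the union of the members of `𝔅` in which `A` has `μ`-density
greater than `α`. The density is compared in multiplied form, so that members of `𝔅` of measure
zero do not contribute. -/
def halo (μ : Measure X) (𝔅 : Set (Set X)) (α : ℝ≥0∞) (A : Set X) : Set X :=
  {x | ∃ B ∈ 𝔅, x ∈ B ∧ α * μ B < μ (A ∩ B)}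

/-- `A` together with its halo at level `α`; iterating this operation fills up the members of `𝔅`
in which `A` has small density. -/
def haloExtension (μ : Measure X) (𝔅 : Set (Set X)) (α : ℝ≥0∞) (A : Set X) : Set X :=
  A ∪ halo μ 𝔅 α A

theorem subset_halo (hB : B ∈ 𝔅) (h : α * μ B < μ (A ∩ B)) : B ⊆ halo μ 𝔅 α A :=
  fun _ hx => ⟨B, hB, hx, h⟩

theorem isOpen_halo [TopologicalSpace X] (h𝔅 : ∀ B ∈ 𝔅, IsOpen B) : IsOpen (halo μ 𝔅 α A) :=
  isOpen_iff_forall_mem_open.2 fun _ ⟨B, hB, hx, hlt⟩ => ⟨B, subset_halo hB hlt, h𝔅 B hB, hx⟩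

theorem subset_iterate_haloExtension (k : ℕ) : A ⊆ (haloExtension μ 𝔅 α)^[k] A :=
  Function.id_le_iterate_of_id_le (fun _ => subset_union_left) k A

theorem measurableSet_haloExtension [TopologicalSpace X] [OpensMeasurableSpace X]
    (h𝔅 : ∀ B ∈ 𝔅, IsOpen B) (hA : MeasurableSet A) : MeasurableSet (haloExtension μ 𝔅 α A) :=
  hA.union (isOpen_halo h𝔅).measurableSet

theorem measure_iterate_haloExtension_le [TopologicalSpace X] [OpensMeasurableSpace X]
    (h𝔅 : ∀ B ∈ 𝔅, IsOpen B) {ν : Measure X} {c : ℝ≥0∞}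
    (hν : ∀ A, MeasurableSet A → ν (halo μ 𝔅 α A) ≤ c * ν A) (hA : MeasurableSet A) (k : ℕ) :
    ν ((haloExtension μ 𝔅 α)^[k] A) ≤ (1 + c) ^ k * ν A := by
  induction k generalizing A with
  | zero => simp
  | succ k ih =>
    have hstep : ν (haloExtension μ 𝔅 α A) ≤ (1 + c) * ν A :=
      calc ν (A ∪ halo μ 𝔅 α A) ≤ ν A + c * ν A :=
            (measure_union_le _ _).trans (by gcongr; exact hν A hA)
        _ = (1 + c) * ν A := by rw [add_mul, one_mul]
    calc ν ((haloExtension μ 𝔅 α)^[k] (haloExtension μ 𝔅 α A))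
        ≤ (1 + c) ^ k * ν (haloExtension μ 𝔅 α A) := ih (measurableSet_haloExtension h𝔅 hA)
      _ ≤ (1 + c) ^ k * ((1 + c) * ν A) := by gcongr
      _ = (1 + c) ^ (k + 1) * ν A := by rw [pow_succ, mul_assoc]

end Halo

section Haar
variable {E : Type*} [NormedAddCommGroup E] [NormedSpace ℝ E] [FiniteDimensional ℝ E]
  [MeasurableSpace E] [BorelSpace E] (μ : Measure E) [μ.IsAddHaarMeasure] {B : Set E}

theorem measure_three_smul_sub_two_smul_le (hB : Convex ℝ B) (ho : IsOpen B)
    (hbd : Bornology.IsBounded B) :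
    μ ((3 : ℝ) • B - (2 : ℝ) • B) ≤ 12 ^ finrank ℝ E * μ B := by
  rcases B.eq_empty_or_nonempty with rfl | hne
  · simp
  have hpos : μ B ≠ 0 := (ho.measure_pos μ hne).ne'
  have hfour : (3 : ℝ) • B + B = (4 : ℝ) • B := by
    simpa [show (3 : ℝ) + 1 = 4 by norm_num] using
      (hB.add_smul (p := 3) (q := 1) (by norm_num) (by norm_num)).symm
  have hthree : B + (2 : ℝ) • B = (3 : ℝ) • B := by
    simpa [show (1 : ℝ) + 2 = 3 by norm_num] using
      (hB.add_smul (p := 1) (q := 2) (by norm_num) (by norm_num)).symm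
  rw [← ENNReal.mul_le_mul_iff_left hpos hbd.measure_lt_top.ne]
  calc μ ((3 : ℝ) • B - (2 : ℝ) • B) * μ B
      ≤ μ ((4 : ℝ) • B) * μ ((3 : ℝ) • B) := by
        simpa only [hfour, hthree] using
          measure_sub_mul_measure_le μ (ho.smul₀ (three_ne_zero (α := ℝ))) ho ((2 : ℝ) • B)
    _ = 12 ^ finrank ℝ E * μ B * μ B := by
        rw [Measure.addHaar_smul, Measure.addHaar_smul, abs_of_pos (by positivity),
          abs_of_pos (by positivity), ENNReal.ofReal_pow (by norm_num),
          ENNReal.ofReal_pow (by norm_num), ENNReal.ofReal_ofNat, ENNReal.ofReal_ofNat,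
          show (12 : ℝ≥0∞) = 4 * 3 by norm_num, mul_pow]
        ring

theorem tendsto_measure_inter_homothety_div {A : Set E} {x : E} (ho : IsOpen B)
    (hbd : Bornology.IsBounded B) (hne : B.Nonempty)
    (hdens : Tendsto (fun r => μ (A ∩ Metric.closedBall x r) / μ (Metric.closedBall x r))
      (𝓝[>] 0) (𝓝 1)) :
    Tendsto (fun r : ℝ => μ (A ∩ homothety x r '' B) / μ (homothety x r '' B))
      (𝓝[>] 0) (𝓝 1) := by
  have himage : ∀ r : ℝ, {x} + r • (-x +ᵥ B) = homothety x r '' B := fun r => by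
    simp only [singleton_add, ← image_smul, ← image_vadd, image_image]
    refine image_congr fun b _ => ?_
    simp only [AffineMap.homothety_apply, vsub_eq_sub, vadd_eq_add]
    module
  simpa only [himage] using Measure.tendsto_addHaar_inter_smul_one_of_density_one μ A x hdens
    (-x +ᵥ B) (ho.vadd (-x)).measurableSet (by simpa using (ho.measure_pos μ hne).ne')
    (by simpa using hbd.measure_lt_top.ne)

theorem exists_measure_inter_homothety_eq {A : Set E} {x : E} {β : ℝ≥0∞} (hB : Convex ℝ B)
    (ho : IsOpen B) (hbd : Bornology.IsBounded B) (hx : x ∈ B)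
    (hdens : Tendsto (fun r => μ (A ∩ Metric.closedBall x r) / μ (Metric.closedBall x r))
      (𝓝[>] 0) (𝓝 1)) (hβ : β < 1) (hAB : μ (A ∩ B) ≤ β * μ B) :
    ∃ r ∈ Ioc (0 : ℝ) 1, μ (A ∩ homothety x r '' B) = β * μ (homothety x r '' B) := by
  let H : ℝ → Set E := fun r => homothety x r '' B
  have hopen : ∀ r > 0, IsOpen (H r) := fun r hr =>
    AffineMap.homothety_isOpenMap x r hr.ne' B ho
  have hvol : ∀ r, μ (H r) = ENNReal.ofReal |r ^ finrank ℝ E| * μ B := fun r =>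
    Measure.addHaar_image_homothety μ x r B
  have hfin : ∀ r, μ (H r) ≠ ∞ := fun r => by
    rw [hvol]
    exact ENNReal.mul_ne_top ENNReal.ofReal_ne_top hbd.measure_lt_top.ne
  have hcont : Continuous fun r => μ.real (H r) := by
    simp only [measureReal_def, hvol, ENNReal.toReal_mul, ENNReal.toReal_ofReal (abs_nonneg _)]
    fun_prop
  obtain ⟨r₀, hr₀, hr₀_mem⟩ :=
    (((tendsto_measure_inter_homothety_div μ ho hbd ⟨x, hx⟩ hdens).eventually_const_lt hβ).and
      (Ioc_mem_nhdsGT one_pos)).exists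
  have hlarge : β * μ (H r₀) ≤ μ (A ∩ H r₀) := ENNReal.mul_le_of_le_div hr₀.le
  have hsmall : μ (A ∩ H 1) ≤ β * μ (H 1) := by simpa [H] using hAB
  exact exists_measure_inter_eq_mul isPreconnected_Ioc
    ((monotoneOn_homothety_image hB hx).mono Ioc_subset_Ioi_self)
    (fun r hr => (hopen r hr.1).measurableSet) (fun r _ => hfin r) hcont.continuousOn hβ.ne_top
    (right_mem_Ioc.2 one_pos) hr₀_mem hsmall hlarge

theorem exists_countable_pairwiseDisjoint_homothety {G : Set E} {r : E → ℝ} (hB : Convex ℝ B)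
    (ho : IsOpen B) (hbd : Bornology.IsBounded B) (hG : G ⊆ B) (hr : ∀ x ∈ G, r x ∈ Ioc 0 1) :
    ∃ u ⊆ G, u.Countable ∧ u.PairwiseDisjoint (fun x => homothety x (r x) '' B) ∧
      μ G ≤ 12 ^ finrank ℝ E * μ (⋃ x ∈ u, homothety x (r x) '' B) := by
  have hne : ∀ x ∈ G, (homothety x (r x) '' B).Nonempty := fun x hx => ⟨_, x, hG hx, rfl⟩
  obtain ⟨u, huG, hdisj, hcover⟩ := Vitali.exists_disjoint_subfamily_covering_enlargement
    (fun x => homothety x (r x) '' B) G r 2 one_lt_two (fun x hx => (hr x hx).1.le) 1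
    (fun x hx => (hr x hx).2) hne
  have hopen : ∀ x ∈ u, IsOpen (homothety x (r x) '' B) := fun x hx =>
    AffineMap.homothety_isOpenMap x (r x) (hr x (huG hx)).1.ne' B ho
  have hu : u.Countable := hdisj.countable_of_isOpen hopen fun x hx => hne x (huG hx)
  have hsub : G ⊆ ⋃ y ∈ u, homothety y (r y) '' ((3 : ℝ) • B - (2 : ℝ) • B) := by
    intro x hx
    obtain ⟨y, hy, hinter, hle⟩ := hcover x hx
    exact mem_biUnion hy (homothety_image_subset_of_inter_nonempty hB (hr x hx).1
      (hr y (huG hy)).1 hle hinter ⟨x, hG hx, AffineMap.homothety_apply_same x _⟩)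
  refine ⟨u, huG, hu, hdisj, ?_⟩
  calc μ G ≤ ∑' y : u, μ (homothety (y : E) (r y) '' ((3 : ℝ) • B - (2 : ℝ) • B)) :=
        (measure_mono hsub).trans (measure_biUnion_le μ hu _)
    _ ≤ ∑' y : u, 12 ^ finrank ℝ E * μ (homothety (y : E) (r y) '' B) := by
        refine ENNReal.tsum_le_tsum fun y => ?_
        rw [Measure.addHaar_image_homothety, Measure.addHaar_image_homothety, mul_left_comm]
        gcongr
        exact measure_three_smul_sub_two_smul_le μ hB ho hbd
    _ = 12 ^ finrank ℝ E * μ (⋃ x ∈ u, homothety x (r x) '' B) := by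
        rw [ENNReal.tsum_mul_left, measure_biUnion hu hdisj fun x hx => (hopen x hx).measurableSet]

/-- A family of bounded open convex sets that is stable under shrinking a member towards any of
its points. Homothecy invariant families of bounded open convex sets have this property, and it is
all that the halo argument uses. -/
structure IsConvexShrinkingBasis (𝔅 : Set (Set E)) : Prop where
  isOpen : ∀ B ∈ 𝔅, IsOpen B
  isBounded : ∀ B ∈ 𝔅, Bornology.IsBounded B
  convex : ∀ B ∈ 𝔅, Convex ℝ B
  homothety_image_mem : ∀ B ∈ 𝔅, ∀ x ∈ B, ∀ r ∈ Ioc (0 : ℝ) 1, homothety x r '' B ∈ 𝔅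

variable {𝔅 : Set (Set E)} {α β : ℝ≥0∞} {A : Set E}

theorem exists_subset_halo_inter (h𝔅 : IsConvexShrinkingBasis 𝔅) (hαβ : α < β) (hβ : β < 1)
    (hB : B ∈ 𝔅) (hA : MeasurableSet A) (hAB : μ (A ∩ B) ≤ β * μ B) :
    ∃ D ⊆ halo μ 𝔅 α A ∩ B, MeasurableSet D ∧ μ (A ∩ D) = β * μ D ∧
      μ (A ∩ B) ≤ 12 ^ finrank ℝ E * μ D := by
  have ho := h𝔅.isOpen B hB
  have hbd := h𝔅.isBounded B hB
  have hconv := h𝔅.convex B hB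
  let G : Set E := {x ∈ A ∩ B |
    Tendsto (fun r => μ (A ∩ Metric.closedBall x r) / μ (Metric.closedBall x r)) (𝓝[>] 0) (𝓝 1)}
  have hG : μ (A ∩ B) ≤ μ G := by
    refine measure_mono_ae ?_
    filter_upwards [(ae_restrict_iff' hA).1 (Besicovitch.ae_tendsto_measure_inter_div μ A)]
      with x hx hxAB using ⟨hxAB, hx hxAB.1⟩
  choose! r hr hdens using fun x (hx : x ∈ G) =>
    exists_measure_inter_homothety_eq μ hconv ho hbd hx.1.2 hx.2 hβ hAB
  obtain ⟨u, huG, hu, hdisj, hcover⟩ :=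
    exists_countable_pairwiseDisjoint_homothety μ hconv ho hbd (fun x hx => hx.1.2) hr
  have hopen : ∀ x ∈ u, IsOpen (homothety x (r x) '' B) := fun x hx =>
    AffineMap.homothety_isOpenMap x (r x) (hr x (huG hx)).1.ne' B ho
  have hsubB : ∀ x ∈ u, homothety x (r x) '' B ⊆ B := fun x hx =>
    homothety_image_subset_self hconv (huG hx).1.2 (Ioc_subset_Icc_self (hr x (huG hx)))
  refine ⟨⋃ x ∈ u, homothety x (r x) '' B, iUnion₂_subset fun x hx =>
    subset_inter (subset_halo (h𝔅.homothety_image_mem B hB x (huG hx).1.2 _ (hr x (huG hx))) ?_)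
      (hsubB x hx), .biUnion hu fun x hx => (hopen x hx).measurableSet, ?_, hG.trans hcover⟩
  · rw [hdens x (huG hx)]
    have hne : (homothety x (r x) '' B).Nonempty := .image _ ⟨x, (huG hx).1.2⟩
    exact ENNReal.mul_lt_mul_left ((hopen x hx).measure_pos μ hne).ne'
      (hbd.subset (hsubB x hx)).measure_lt_top.ne hαβ
  · rw [inter_iUnion₂, measure_biUnion hu (hdisj.mono fun _ => inter_subset_right)
        fun x hx => hA.inter (hopen x hx).measurableSet,
      measure_biUnion hu hdisj fun x hx => (hopen x hx).measurableSet, ← ENNReal.tsum_mul_left]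
    exact tsum_congr fun x => hdens x (huG x.2)

theorem mul_measure_inter_le_measure_haloExtension_inter (h𝔅 : IsConvexShrinkingBasis 𝔅)
    (hαβ : α < β) (hβ : β < 1) (hB : B ∈ 𝔅) (hA : MeasurableSet A) (hAB : μ (A ∩ B) ≤ β * μ B) :
    (1 + (1 - β) / 12 ^ finrank ℝ E) * μ (A ∩ B) ≤ μ (haloExtension μ 𝔅 α A ∩ B) := by
  obtain ⟨D, hD, hDmeas, hAD, hABD⟩ := exists_subset_halo_inter μ h𝔅 hαβ hβ hB hA hAB
  have hDtop : μ D ≠ ∞ := measure_ne_top_of_subset (hD.trans inter_subset_right)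
    (h𝔅.isBounded B hB).measure_lt_top.ne
  have hdiff : (1 - β) * μ D = μ (D \ A) := by
    rw [← sdiff_inter_self_eq_sdiff, measure_sdiff inter_subset_right
      (hA.inter hDmeas).nullMeasurableSet (measure_ne_top_of_subset inter_subset_right hDtop), hAD,
      ENNReal.sub_mul fun _ _ => hDtop, one_mul]
  calc (1 + (1 - β) / 12 ^ finrank ℝ E) * μ (A ∩ B)
      ≤ μ (A ∩ B) + (1 - β) / 12 ^ finrank ℝ E * (12 ^ finrank ℝ E * μ D) := by
        rw [add_mul, one_mul]
        gcongr
    _ = μ (A ∩ B) + μ (D \ A) := by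
        rw [← mul_assoc, ENNReal.div_mul_cancel (by positivity) (by finiteness), hdiff]
    _ = μ (A ∩ B ∪ D \ A) := (measure_union (disjoint_sdiff_right.mono_left inter_subset_left)
        (hDmeas.diff hA)).symm
    _ ≤ μ (haloExtension μ 𝔅 α A ∩ B) := measure_mono <| union_subset
        (inter_subset_inter_left B subset_union_left) fun x hx =>
          ⟨.inr (hD hx.1).1, (hD hx.1).2⟩

theorem subset_iterate_haloExtension_of_lt (h𝔅 : IsConvexShrinkingBasis 𝔅) (hαβ : α < β)
    (hβ : β < 1) (hB : B ∈ 𝔅) (hA : MeasurableSet A) {k : ℕ}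
    (h : μ B < (1 + (1 - β) / 12 ^ finrank ℝ E) ^ k * μ (A ∩ B)) :
    B ⊆ (haloExtension μ 𝔅 α)^[k] A := by
  induction k generalizing A with
  | zero =>
    rw [pow_zero, one_mul] at h
    exact absurd h (measure_mono inter_subset_right).not_gt
  | succ k ih =>
    rcases le_or_gt (μ (A ∩ B)) (β * μ B) with hsparse | hdense
    · refine ih (measurableSet_haloExtension h𝔅.isOpen hA) (h.trans_le ?_)
      rw [pow_succ, mul_assoc]
      gcongr
      exact mul_measure_inter_le_measure_haloExtension_inter μ h𝔅 hαβ hβ hB hA hsparse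
    · exact (subset_halo hB ((mul_le_mul_left hαβ.le _).trans_lt hdense)).trans
        (subset_union_right.trans (subset_iterate_haloExtension k))

theorem exists_measure_halo_inv_pow_le (h𝔅 : IsConvexShrinkingBasis 𝔅) {ν : Measure E}
    (hα : α < 1) {c : ℝ≥0∞} (hc : c ≠ ∞)
    (hν : ∀ A, MeasurableSet A → ν (halo μ 𝔅 α A) ≤ c * ν A) {b : ℝ≥0∞} (hb : b ≠ ∞) :
    ∃ Q ≠ ∞, ∀ (m : ℕ) (A : Set E), MeasurableSet A →
      ν (halo μ 𝔅 (b ^ m)⁻¹ A) ≤ Q ^ m * ν A := by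
  obtain ⟨β, hαβ, hβ⟩ := exists_between hα
  set η : ℝ≥0∞ := 1 + (1 - β) / 12 ^ finrank ℝ E
  have hη_one : 1 < η := ENNReal.lt_add_right ENNReal.one_ne_top
    (ENNReal.div_ne_zero.2 ⟨(tsub_pos_of_lt hβ).ne', by finiteness⟩)
  obtain ⟨N, hN⟩ := ((ENNReal.tendsto_pow_atTop_nhds_top_iff.2 hη_one).eventually_const_lt
    hb.lt_top).exists
  refine ⟨(1 + c) ^ N, by finiteness, fun m A hA => ?_⟩
  calc ν (halo μ 𝔅 (b ^ m)⁻¹ A) ≤ ν ((haloExtension μ 𝔅 α)^[N * m] A) := by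
        refine measure_mono fun x ⟨B, hB, hx, hlt⟩ =>
          subset_iterate_haloExtension_of_lt μ h𝔅 hαβ hβ hB hA ?_ hx
        have hpos : μ B ≠ 0 := ((h𝔅.isOpen B hB).measure_pos μ ⟨x, hx⟩).ne'
        have htop : μ B ≠ ∞ := (h𝔅.isBounded B hB).measure_lt_top.ne
        rw [mul_comm, ← div_eq_mul_inv, ENNReal.div_lt_iff (.inr hpos) (.inr htop)] at hlt
        rw [pow_mul, mul_comm]
        exact hlt.trans_le (by gcongr)
    _ ≤ ((1 + c) ^ N) ^ m * ν A := by
        rw [← pow_mul]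
        exact measure_iterate_haloExtension_le h𝔅.isOpen hν hA _

end Haar

section LayerCake

variable {X : Type*} [MeasurableSpace X] {μ : Measure X} {f F : X → ℝ≥0∞} {p : ℝ}

theorem lintegral_ofReal_rpow_Ioi_eq_top (s : ℝ) :
    ∫⁻ t in Ioi (0 : ℝ), ENNReal.ofReal (t ^ s) = ∞ := by
  by_contra h
  refine not_integrableOn_Ioi_rpow s ((lintegral_ofReal_ne_top_iff_integrable ?_ ?_).1 h)
  · exact (measurable_id.pow_const s).aestronglyMeasurable
  · filter_upwards [ae_restrict_mem measurableSet_Ioi] with t ht using Real.rpow_nonneg ht.le s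

theorem lintegral_rpow_eq_lintegral_meas_ofReal_lt_mul (hf : Measurable f) (hp : 0 < p) :
    ∫⁻ x, f x ^ p ∂μ = ENNReal.ofReal p *
      ∫⁻ t in Ioi (0 : ℝ), μ {x | ENNReal.ofReal t < f x} * ENNReal.ofReal (t ^ (p - 1)) := by
  by_cases hfin : ∀ᵐ x ∂μ, f x ≠ ∞
  · calc ∫⁻ x, f x ^ p ∂μ = ∫⁻ x, ENNReal.ofReal ((f x).toReal ^ p) ∂μ := by
          refine lintegral_congr_ae (hfin.mono fun x hx => ?_)
          simp only
          rw [← ENNReal.ofReal_rpow_of_nonneg ENNReal.toReal_nonneg hp.le, ENNReal.ofReal_toReal hx]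
      _ = _ := lintegral_rpow_eq_lintegral_meas_lt_mul μ (.of_forall fun _ => ENNReal.toReal_nonneg)
          hf.ennreal_toReal.aemeasurable hp
      _ = _ := by
          congr 1
          refine setLIntegral_congr_fun measurableSet_Ioi fun t ht => ?_
          congr 1
          refine measure_congr (hfin.mono fun x hx => propext ?_)
          exact (ENNReal.ofReal_lt_iff_lt_toReal (le_of_lt ht) hx).symm
  · have htop : μ {x | f x = ∞} ≠ 0 := fun h => hfin (ae_iff.2 (by simpa using h))
    have hleft : ∫⁻ x, f x ^ p ∂μ = ∞ := by
      by_contra h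
      refine hfin ((ae_lt_top (hf.pow_const p) h).mono fun x hx hfx => ?_)
      simp [hfx, hp] at hx
    have hright : ∫⁻ t in Ioi (0 : ℝ), μ {x | f x = ∞} * ENNReal.ofReal (t ^ (p - 1)) = ∞ := by
      rw [lintegral_const_mul _ (by fun_prop), lintegral_ofReal_rpow_Ioi_eq_top,
        ENNReal.mul_top htop]
    have hle : ∫⁻ t in Ioi (0 : ℝ), μ {x | f x = ∞} * ENNReal.ofReal (t ^ (p - 1)) ≤
        ∫⁻ t in Ioi (0 : ℝ), μ {x | ENNReal.ofReal t < f x} * ENNReal.ofReal (t ^ (p - 1)) := by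
      gcongr with t x
      exact fun hx => hx ▸ ENNReal.ofReal_lt_top
    rw [hleft, top_le_iff.1 (hright.symm.trans_le hle),
      ENNReal.mul_top (ENNReal.ofReal_pos.2 hp).ne']

theorem lintegral_meas_mul_ofReal_lt_mul (hf : Measurable f) (hp : 0 < p) {a : ℝ≥0∞}
    (ha₀ : a ≠ 0) (ha : a ≠ ∞) :
    ENNReal.ofReal p *
      ∫⁻ t in Ioi (0 : ℝ), μ {x | a * ENNReal.ofReal t < f x} * ENNReal.ofReal (t ^ (p - 1)) =
    (∫⁻ x, f x ^ p ∂μ) / a ^ p := by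
  have hlevel : ∀ t : ℝ, {x | a * ENNReal.ofReal t < f x} = {x | ENNReal.ofReal t < f x / a} :=
    fun t => by simp only [ENNReal.lt_div_iff_mul_lt (.inl ha₀) (.inl ha), mul_comm a]
  simp only [hlevel]
  rw [← lintegral_rpow_eq_lintegral_meas_ofReal_lt_mul (hf.div_const a) hp]
  simp only [div_eq_mul_inv, ENNReal.mul_rpow_of_nonneg _ _ hp.le, ENNReal.inv_rpow]
  exact lintegral_mul_const _ (hf.pow_const p)

theorem lintegral_rpow_le_of_meas_lt_le_tsum (hf : Measurable f) (hF : Measurable F) (hp : 0 < p)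
    {a b Q : ℝ≥0∞} (ha₀ : a ≠ 0) (ha : a ≠ ∞) (hb₀ : b ≠ 0) (hb : b ≠ ∞)
    (h : ∀ t : ℝ, 0 < t → μ {x | a * ENNReal.ofReal t < F x} ≤
      ∑' m : ℕ, Q ^ m * μ {x | b ^ m * ENNReal.ofReal t < f x}) :
    ∫⁻ x, F x ^ p ∂μ ≤ a ^ p * (1 - Q / b ^ p)⁻¹ * ∫⁻ x, f x ^ p ∂μ := by
  have hmeas : ∀ m : ℕ, Measurable fun t : ℝ =>
      μ {x | b ^ m * ENNReal.ofReal t < f x} * ENNReal.ofReal (t ^ (p - 1)) := fun m => by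
    refine Measurable.mul (Antitone.measurable fun s t hst => ?_) (by fun_prop)
    gcongr
  have hlayer : (∫⁻ x, F x ^ p ∂μ) / a ^ p ≤ (1 - Q / b ^ p)⁻¹ * ∫⁻ x, f x ^ p ∂μ :=
    calc (∫⁻ x, F x ^ p ∂μ) / a ^ p
        = ENNReal.ofReal p * ∫⁻ t in Ioi (0 : ℝ),
            μ {x | a * ENNReal.ofReal t < F x} * ENNReal.ofReal (t ^ (p - 1)) :=
          (lintegral_meas_mul_ofReal_lt_mul hF hp ha₀ ha).symm
      _ ≤ ENNReal.ofReal p * ∫⁻ t in Ioi (0 : ℝ), ∑' m : ℕ,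
            Q ^ m * (μ {x | b ^ m * ENNReal.ofReal t < f x} * ENNReal.ofReal (t ^ (p - 1))) := by
          gcongr ENNReal.ofReal p * ?_
          refine setLIntegral_mono' measurableSet_Ioi fun t ht => ?_
          simp only [← mul_assoc, ENNReal.tsum_mul_right]
          gcongr
          exact h t ht
      _ = ∑' m : ℕ, Q ^ m * ((∫⁻ x, f x ^ p ∂μ) / (b ^ m) ^ p) := by
          rw [lintegral_tsum fun m => ((hmeas m).const_mul _).aemeasurable, ← ENNReal.tsum_mul_left]
          refine tsum_congr fun m => ?_
          rw [lintegral_const_mul _ (hmeas m), mul_left_comm,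
            lintegral_meas_mul_ofReal_lt_mul hf hp (pow_ne_zero m hb₀) (by finiteness)]
      _ = (1 - Q / b ^ p)⁻¹ * ∫⁻ x, f x ^ p ∂μ := by
          rw [← ENNReal.tsum_geometric, ← ENNReal.tsum_mul_right]
          refine tsum_congr fun m => ?_
          rw [← ENNReal.rpow_natCast b, ← ENNReal.rpow_mul, mul_comm (m : ℝ), ENNReal.rpow_mul,
            ENNReal.rpow_natCast, div_eq_mul_inv, div_eq_mul_inv, mul_pow, ENNReal.inv_pow]
          ring
  rw [mul_assoc]
  exact (ENNReal.div_le_iff' (by simp [ha₀, ha]) (by finiteness)).1 hlayer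

end LayerCake

section Slicing

theorem le_add_tsum_indicator_two_pow_mul {t : ℝ≥0∞} (ht : t ≠ 0) (y : ℝ≥0∞) :
    y ≤ t + ∑' m : ℕ, (Iio y).indicator id (2 ^ m * t) := by
  have htrunc : ∀ N,
      min y (2 ^ N * t) ≤ t + ∑ m ∈ Finset.range N, (Iio y).indicator id (2 ^ m * t) := by
    intro N
    induction N with
    | zero => simp
    | succ N ih =>
      rw [Finset.sum_range_succ, ← add_assoc]
      rcases le_or_gt y (2 ^ N * t) with hle | hlt
      · exact (min_le_left _ _).trans (((min_eq_left hle).symm.trans_le ih).trans le_self_add)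
      · rw [min_eq_right hlt.le] at ih
        rw [indicator_of_mem (mem_Iio.2 hlt)]
        calc min y (2 ^ (N + 1) * t) ≤ 2 ^ N * t + 2 ^ N * t :=
              (min_le_right _ _).trans_eq (by ring)
          _ ≤ _ := add_le_add_left ih _
  refine le_of_forall_lt fun z hz => ?_
  obtain ⟨N, hN⟩ := ((ENNReal.tendsto_pow_atTop_nhds_top_iff.2
    ENNReal.one_lt_two).eventually_const_lt (ENNReal.div_lt_top hz.ne_top ht)).exists
  rw [ENNReal.div_lt_iff (.inl ht) (.inr hz.ne_top)] at hN
  exact (lt_min hz hN).trans_le ((htrunc N).trans (by gcongr; exact ENNReal.sum_le_tsum _))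

theorem exists_lt_measure_inter_of_lt_setLIntegral {X : Type*} [MeasurableSpace X] {μ : Measure X}
    {f : X → ℝ≥0∞} {t : ℝ≥0∞} (hf : Measurable f) (ht : t ≠ 0) {B : Set X}
    (h : 3 * t * μ B < ∫⁻ x in B, f x ∂μ) :
    ∃ m : ℕ, (4 ^ m)⁻¹ * μ B < μ ({x | 2 ^ m * t < f x} ∩ B) := by
  by_contra! hle
  have hlevel : ∀ m : ℕ, MeasurableSet {x | 2 ^ m * t < f x} := fun m =>
    measurableSet_lt measurable_const hf
  refine h.not_ge ?_
  calc ∫⁻ x in B, f x ∂μ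
      ≤ ∫⁻ x in B, (t + ∑' m : ℕ, {z | 2 ^ m * t < f z}.indicator (fun _ => 2 ^ m * t) x) ∂μ :=
        lintegral_mono fun x => le_add_tsum_indicator_two_pow_mul ht (f x)
    _ = t * μ B + ∑' m : ℕ, 2 ^ m * t * μ ({x | 2 ^ m * t < f x} ∩ B) := by
        rw [lintegral_add_left measurable_const, setLIntegral_const,
          lintegral_tsum fun m => (measurable_const.indicator (hlevel m)).aemeasurable]
        simp only [lintegral_indicator_const (hlevel _), Measure.restrict_apply (hlevel _)]
    _ ≤ t * μ B + ∑' m : ℕ, 2⁻¹ ^ m * (t * μ B) := by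
        refine add_le_add_right (ENNReal.tsum_le_tsum fun m => ?_) _
        calc 2 ^ m * t * μ ({x | 2 ^ m * t < f x} ∩ B) ≤ 2 ^ m * t * ((4 ^ m)⁻¹ * μ B) := by
              gcongr
              exact hle m
          _ = 2⁻¹ ^ m * (t * μ B) := by
              have hhalf : (2 : ℝ≥0∞) ^ m * (4 ^ m)⁻¹ = 2⁻¹ ^ m := by
                rw [ENNReal.inv_pow, ← mul_pow, show (4 : ℝ≥0∞) = 2 * 2 by norm_num,
                  ENNReal.mul_inv (by simp) (by simp), ← mul_assoc,
                  ENNReal.mul_inv_cancel two_ne_zero ENNReal.ofNat_ne_top, one_mul]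
              rw [← hhalf]
              ring
    _ = 3 * t * μ B := by
        rw [ENNReal.tsum_mul_right, ENNReal.tsum_geometric, ENNReal.one_sub_inv_two, inv_inv]
        ring

end Slicing

section MaximalOperator

variable {n : ℕ} {μ ν : Measure (EuclideanSpace ℝ (Fin n))}
  {𝔅 : Set (Set (EuclideanSpace ℝ (Fin n)))}

theorem lt_maxOp_iff (hfin : ∀ B ∈ 𝔅, μ B ≠ ∞) {f : EuclideanSpace ℝ (Fin n) → ℝ} {a : ℝ≥0∞}
    {x : EuclideanSpace ℝ (Fin n)} :
    a < maxOp μ 𝔅 f x ↔ ∃ B ∈ 𝔅, x ∈ B ∧ a * μ B < ∫⁻ y in B, ENNReal.ofReal |f y| ∂μ := by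
  simp only [maxOp, lt_iSup_iff, exists_prop]
  refine exists_congr fun B => and_congr_right fun hB => and_congr_right fun _ => ?_
  rcases eq_or_ne (μ B) 0 with hzero | hpos
  · simp [hzero, setLIntegral_measure_zero B _ hzero]
  · rw [ENNReal.lt_div_iff_mul_lt (.inl hpos) (.inl (hfin B hB))]
    exact and_iff_right (pos_iff_ne_zero.2 hpos)

theorem measurable_maxOp (hopen : ∀ B ∈ 𝔅, IsOpen B) (hfin : ∀ B ∈ 𝔅, μ B ≠ ∞)
    (f : EuclideanSpace ℝ (Fin n) → ℝ) : Measurable (maxOp μ 𝔅 f) := by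
  refine measurable_of_Ioi fun a => IsOpen.measurableSet <| isOpen_iff_forall_mem_open.2 ?_
  intro x hx
  obtain ⟨B, hB, hxB, hlt⟩ := (lt_maxOp_iff hfin).1 hx
  exact ⟨B, fun y hy => (lt_maxOp_iff hfin).2 ⟨B, hB, hy, hlt⟩, hopen B hB, hxB⟩

theorem setOf_lt_maxOp_indicator (hfin : ∀ B ∈ 𝔅, μ B ≠ ∞) {A : Set (EuclideanSpace ℝ (Fin n))}
    (hA : MeasurableSet A) (a : ℝ≥0∞) :
    {x | a < maxOp μ 𝔅 (A.indicator 1) x} = halo μ 𝔅 a A := by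
  have habs : ∀ y, ENNReal.ofReal |A.indicator (1 : EuclideanSpace ℝ (Fin n) → ℝ) y| =
      A.indicator 1 y := fun y => by by_cases hy : y ∈ A <;> simp [hy]
  simp only [lt_maxOp_iff hfin, habs, lintegral_indicator_one hA, Measure.restrict_apply hA]
  rfl

theorem setOf_lt_maxOp_subset_iUnion_halo (hfin : ∀ B ∈ 𝔅, μ B ≠ ∞)
    {f : EuclideanSpace ℝ (Fin n) → ℝ} (hf : Measurable f) {t : ℝ≥0∞} (ht : t ≠ 0) :
    {x | 3 * t < maxOp μ 𝔅 f x} ⊆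
      ⋃ m : ℕ, halo μ 𝔅 (4 ^ m)⁻¹ {y | 2 ^ m * t < ENNReal.ofReal |f y|} := by
  intro x hx
  obtain ⟨B, hB, hxB, hlt⟩ := (lt_maxOp_iff hfin).1 hx
  obtain ⟨m, hm⟩ := exists_lt_measure_inter_of_lt_setLIntegral (by fun_prop) ht hlt
  exact mem_iUnion.2 ⟨m, B, hB, hxB, hm⟩

theorem boundedOnLp_of_measure_halo_inv_four_pow_le (hopen : ∀ B ∈ 𝔅, IsOpen B)
    (hfin : ∀ B ∈ 𝔅, μ B ≠ ∞) {Q : ℝ≥0∞}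
    (hν : ∀ (m : ℕ) (A : Set (EuclideanSpace ℝ (Fin n))), MeasurableSet A →
      ν (halo μ 𝔅 (4 ^ m)⁻¹ A) ≤ Q ^ m * ν A) {p : ℝ} (hp : 0 < p) (hQ : Q < 2 ^ p) :
    BoundedOnLp μ ν 𝔅 p := by
  have hratio : Q / 2 ^ p < 1 := ENNReal.div_lt_of_lt_mul (by rwa [one_mul])
  refine ⟨3 ^ p * (1 - Q / 2 ^ p)⁻¹, ENNReal.mul_ne_top (by finiteness)
    (ENNReal.inv_ne_top.2 (tsub_pos_of_lt hratio).ne'), fun f hf => ?_⟩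
  refine lintegral_rpow_le_of_meas_lt_le_tsum (by fun_prop) (measurable_maxOp hopen hfin f) hp
    three_ne_zero ENNReal.ofNat_ne_top two_ne_zero ENNReal.ofNat_ne_top fun t ht => ?_
  calc ν {x | 3 * ENNReal.ofReal t < maxOp μ 𝔅 f x}
      ≤ ∑' m : ℕ, ν (halo μ 𝔅 (4 ^ m)⁻¹ {y | 2 ^ m * ENNReal.ofReal t < ENNReal.ofReal |f y|}) :=
        (measure_mono (setOf_lt_maxOp_subset_iUnion_halo hfin hf
          (ENNReal.ofReal_pos.2 ht).ne')).trans (measure_iUnion_le _)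
    _ ≤ ∑' m : ℕ, Q ^ m * ν {y | 2 ^ m * ENNReal.ofReal t < ENNReal.ofReal |f y|} :=
        ENNReal.tsum_le_tsum fun m => hν m _ (measurableSet_lt measurable_const (by fun_prop))

theorem exists_tauberianCond_of_boundedOnLp (hopen : ∀ B ∈ 𝔅, IsOpen B)
    (hfin : ∀ B ∈ 𝔅, μ B ≠ ∞) {p γ : ℝ} (hp : 0 < p) (hγ : 0 < γ) (h : BoundedOnLp μ ν 𝔅 p) :
    ∃ c > 0, TauberianCond μ ν 𝔅 γ c := by
  obtain ⟨C, hC, hbound⟩ := h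
  have hγp : ENNReal.ofReal γ ^ p ≠ 0 := by simp [hγ]
  have hc : C / ENNReal.ofReal γ ^ p ≠ ∞ := ENNReal.div_ne_top hC hγp
  refine ⟨(C / ENNReal.ofReal γ ^ p).toReal + 1, by positivity, fun A hA => ?_⟩
  calc ν {x | ENNReal.ofReal γ < maxOp μ 𝔅 (A.indicator 1) x}
      ≤ ν {x | ENNReal.ofReal γ ^ p ≤ maxOp μ 𝔅 (A.indicator 1) x ^ p} :=
        measure_mono fun x (hx : _ < _) => ENNReal.rpow_le_rpow hx.le hp.le
    _ ≤ (∫⁻ x, maxOp μ 𝔅 (A.indicator 1) x ^ p ∂ν) / ENNReal.ofReal γ ^ p :=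
        meas_ge_le_lintegral_div ((measurable_maxOp hopen hfin _).pow_const p).aemeasurable hγp
          (by finiteness)
    _ ≤ C * ν A / ENNReal.ofReal γ ^ p := by
        gcongr
        refine (hbound _ (measurable_one.indicator hA)).trans_eq ?_
        rw [← lintegral_indicator_one hA]
        congr 2 with x
        by_cases hx : x ∈ A <;> simp [hx, hp]
    _ ≤ ENNReal.ofReal ((C / ENNReal.ofReal γ ^ p).toReal + 1) * ν A := by
        rw [ENNReal.mul_div_right_comm]
        gcongr
        exact ENNReal.le_ofReal_iff_toReal_le hc (by positivity) |>.2 (by linarith)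

theorem exists_forall_lt_boundedOnLp_of_tauberianCond [μ.IsAddHaarMeasure]
    (h𝔅 : IsConvexShrinkingBasis 𝔅) {γ c : ℝ} (hγ : γ < 1) (h : TauberianCond μ ν 𝔅 γ c) :
    ∃ p₀ : ℝ, 1 < p₀ ∧ ∀ p : ℝ, p₀ < p → BoundedOnLp μ ν 𝔅 p := by
  have hfin : ∀ B ∈ 𝔅, μ B ≠ ∞ := fun B hB => (h𝔅.isBounded B hB).measure_lt_top.ne
  have hhalo : ∀ A, MeasurableSet A →
      ν (halo μ 𝔅 (ENNReal.ofReal γ) A) ≤ ENNReal.ofReal c * ν A := fun A hA => by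
    simpa only [setOf_lt_maxOp_indicator hfin hA] using h A hA
  obtain ⟨Q, hQ, hgrowth⟩ := exists_measure_halo_inv_pow_le μ h𝔅 (ENNReal.ofReal_lt_one.2 hγ)
    ENNReal.ofReal_ne_top hhalo (ENNReal.ofNat_ne_top (n := 4))
  obtain ⟨N, hN⟩ := ((ENNReal.tendsto_pow_atTop_nhds_top_iff.2
    ENNReal.one_lt_two).eventually_const_lt hQ.lt_top).exists
  refine ⟨N + 2, by linarith [N.cast_nonneg (α := ℝ)], fun p hp => ?_⟩
  refine boundedOnLp_of_measure_halo_inv_four_pow_le h𝔅.isOpen hfin hgrowth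
    (by linarith [N.cast_nonneg (α := ℝ)]) (hN.trans_le ?_)
  rw [← ENNReal.rpow_natCast]
  exact ENNReal.rpow_le_rpow_of_exponent_le one_le_two (by linarith)

theorem HomothecyInvariant.isConvexShrinkingBasis (hhom : HomothecyInvariant 𝔅)
    (hB : ∀ B ∈ 𝔅, IsConvexBasisSet B) : IsConvexShrinkingBasis 𝔅 where
  isOpen B hmem := (hB B hmem).2.2.1
  isBounded B hmem := (hB B hmem).2.1
  convex B hmem := (hB B hmem).2.2.2
  homothety_image_mem B hmem x _ r hr := by
    convert (hhom _ ((hhom B hmem).2 r hr.1)).1 (x - r • x) using 1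
    simp only [← image_smul, ← image_vadd, image_image]
    refine image_congr fun b _ => ?_
    simp only [AffineMap.homothety_apply, vsub_eq_sub, vadd_eq_add]
    module

theorem statement3_general (μ ν : Measure (EuclideanSpace ℝ (Fin n))) [μ.IsAddHaarMeasure]
    (h𝔅 : IsConvexShrinkingBasis 𝔅) :
    (∃ γ ∈ Ioo (0 : ℝ) 1, ∃ c : ℝ, 0 < c ∧ TauberianCond μ ν 𝔅 γ c) ↔
      ∃ p₀ : ℝ, 1 < p₀ ∧ ∀ p : ℝ, p₀ < p → BoundedOnLp μ ν 𝔅 p := by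
  constructor
  · rintro ⟨γ, hγ, c, -, h⟩
    exact exists_forall_lt_boundedOnLp_of_tauberianCond h𝔅 hγ.2 h
  · rintro ⟨p₀, hp₀, h⟩
    exact ⟨1 / 2, by norm_num, exists_tauberianCond_of_boundedOnLp h𝔅.isOpen
      (fun B hB => (h𝔅.isBounded B hB).measure_lt_top.ne) (by linarith) one_half_pos
      (h (p₀ + 1) (lt_add_one p₀))⟩

end MaximalOperator

/-- For a homothecy invariant basis `𝔅` of nonempty bounded open convex
sets and a nonnegative locally integrable weight `w` (finite on members of `𝔅`), the
weighted Tauberian condition at some fixed level `γ ∈ (0,1)` for the unweighted maximal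
operator `M_𝔅` holds iff there is `p₀ > 1` such that `M_𝔅` is bounded on `L^p(w)` for
all `p > p₀`. -/
theorem statement3 (n : ℕ) (𝔅 : Set (Set (EuclideanSpace ℝ (Fin n))))
    (hB : ∀ B ∈ 𝔅, IsConvexBasisSet B) (hhom : HomothecyInvariant 𝔅)
    (w : EuclideanSpace ℝ (Fin n) → ℝ) (hw0 : ∀ x, 0 ≤ w x)
    (hwloc : LocallyIntegrable w volume)
    (hwB : ∀ B ∈ 𝔅, ∫⁻ x in B, ENNReal.ofReal (w x) ∂volume < ⊤) :
    (∃ γ ∈ Set.Ioo (0 : ℝ) 1, ∃ c : ℝ, 0 < c ∧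
      TauberianCond volume (volume.withDensity fun x => ENNReal.ofReal (w x)) 𝔅 γ c)
    ↔ (∃ p₀ : ℝ, 1 < p₀ ∧ ∀ p : ℝ, p₀ < p →
        BoundedOnLp volume (volume.withDensity fun x => ENNReal.ofReal (w x)) 𝔅 p) := by
  exact statement3_general volume _ (hhom.isConvexShrinkingBasis hB)
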